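/- arXiv:2104.14527 — 5 statements merged into one kernel-verified Lean document; each statement's English description precedes it below -/
import Mathlib

section
/- Optimal policies under parity-of-exposure constraints are envy-free (Proposition 1, first part): suppose the finite item set A is partitioned into categories A_1, …, A_S, and for every user m and context x, π_par^m(·|x) maximizes ∑_{a∈A} p(a) ρ^m(a|x) over all probability distributions p on A satisfying the parity constraint ∑_{a∈A_s} p(a) = |A_s|/|A| for every s ∈ {1,…,S}. Then for all users m and n, u^m(π_par^n) ≤ u^m(π_par^m), i.e. the policies (π_par^m)_{m=1}^M are 0-envy-free. -/
open Finset

/-!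
The parity constraint is the same for every user, so in each context the policy of user `n` is
feasible in the problem solved by user `m`. Utility is a nonnegatively weighted sum over contexts of
the linear objectives, so maximizing in each context separately maximizes utility over all feasible
policies, among which are those of the other users.
-/

/-- `ε`-envy-freeness of a family of choices `π`, where `u m` is the utility of user `m`: no user
gains more than `ε` by receiving the choice made for another. In the paper
`P` is the type of policies. -/
def IsEnvyFree {ι P R : Type*} [Add R] [LE R] (ε : R) (u : ι → P → R) (π : ι → P) : Prop :=
  ∀ m n, u m (π n) ≤ ε + u m (π m)

/-- The utility `∑ x, ∑ a, q(x) π(a|x) ρ(a|x)` of the policy `π` for one user, with context weights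
`q` and expected rewards `ρ`; `π(a|x)` is encoded as `π x a`. -/
def policyUtility {X A R : Type*} [Fintype X] [Fintype A] [Mul R] [AddCommMonoid R]
    (q : X → R) (ρ π : X → A → R) : R :=
  ∑ x, ∑ a, q x * π x a * ρ x a

theorem isEnvyFree_zero_of_isMaxOn {ι P R : Type*} [AddZeroClass R] [Preorder R]
    {u : ι → P → R} {π : ι → P} {C : Set P} (hfeas : ∀ m, π m ∈ C)
    (hmax : ∀ m, IsMaxOn (u m) C (π m)) : IsEnvyFree 0 u π := by
  intro m n
  rw [zero_add]
  exact hmax m (hfeas n)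

section Utility

variable {X A R : Type*} [Fintype X] [Fintype A] [Semiring R]

theorem policyUtility_eq_sum_mul_dotProduct (q : X → R) (ρ π : X → A → R) :
    policyUtility q ρ π = ∑ x, q x * (π x ⬝ᵥ ρ x) := by
  simp only [policyUtility, dotProduct, mul_sum, mul_assoc]

variable [PartialOrder R] [IsOrderedRing R]

theorem isMaxOn_policyUtility_pi {q : X → R} {ρ π : X → A → R} {C : X → Set (A → R)}
    (hq : ∀ x, 0 ≤ q x) (hmax : ∀ x, IsMaxOn (· ⬝ᵥ ρ x) (C x) (π x)) :
    IsMaxOn (policyUtility q ρ) (Set.univ.pi C) π := by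
  refine isMaxOn_iff.2 fun p hp => ?_
  simp only [policyUtility_eq_sum_mul_dotProduct]
  exact sum_le_sum fun x _ => mul_le_mul_of_nonneg_left (hmax x (hp x trivial)) (hq x)

theorem parity_of_exposure_policies_are_envy_free_general {ι : Type*}
    {q : ι → X → R} {ρ π : ι → X → A → R} {C : X → Set (A → R)}
    (hq : ∀ m x, 0 ≤ q m x) (hfeas : ∀ m x, π m x ∈ C x)
    (hmax : ∀ m x, IsMaxOn (· ⬝ᵥ ρ m x) (C x) (π m x)) :
    IsEnvyFree 0 (fun m => policyUtility (q m) (ρ m)) π :=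
  isEnvyFree_zero_of_isMaxOn (C := Set.univ.pi C) (fun m x _ => hfeas m x)
    fun m => isMaxOn_policyUtility_pi (hq m) (hmax m)

end Utility

/-- Optimal policies under parity-of-exposure constraints are envy-free
(Proposition 1, first part).  The finite item set `A` is partitioned into `S`
categories by `cat : A → Fin S`.  A distribution `p` on `A` satisfies the parity
constraint if, for every category `s`, `∑_{a : cat a = s} p a = |A_s| / |A|`.
If, for every user `m` and context `x`, `πpar m x` is a probability distribution
on `A` satisfying the parity constraint and maximizing `∑_a p a · ρ m x a` among
all such distributions, then for all users `m n`, `u m (πpar n) ≤ 0 + u m (πpar m)`,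
i.e. the policies `(πpar m)` are `0`-envy-free. -/
theorem parity_of_exposure_policies_are_envy_free
    {M S : ℕ} {X A : Type*} [Fintype X] [Fintype A]
    (q : Fin M → X → ℝ) (ρ : Fin M → X → A → ℝ) (cat : A → Fin S)
    (πpar : Fin M → X → A → ℝ)
    (u : Fin M → (X → A → ℝ) → ℝ)
    (hu : ∀ m p, u m p = ∑ x, ∑ a, q m x * p x a * ρ m x a)
    (hq_nonneg : ∀ m x, 0 ≤ q m x) (hq_sum : ∀ m, ∑ x, q m x = 1)
    (hρ : ∀ m x a, ρ m x a ∈ Set.Icc (0 : ℝ) 1)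
    (Par : (A → ℝ) → Prop)
    (hPar : ∀ p, Par p ↔ ((∀ a, 0 ≤ p a) ∧ (∑ a, p a = 1) ∧
      ∀ s : Fin S, ∑ a ∈ Finset.univ.filter (fun a => cat a = s), p a =
        ((Finset.univ.filter (fun a => cat a = s)).card : ℝ) / (Fintype.card A : ℝ)))
    (hfeas : ∀ m x, Par (πpar m x))
    (hopt : ∀ m x (p : A → ℝ), Par p →
      ∑ a, p a * ρ m x a ≤ ∑ a, πpar m x a * ρ m x a) :
    ∀ m n, u m (πpar n) ≤ 0 + u m (πpar m) := by
  obtain rfl : u = fun m => policyUtility (q m) (ρ m) := funext₂ hu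
  exact parity_of_exposure_policies_are_envy_free_general (C := fun _ => {p | Par p})
    hq_nonneg hfeas hopt
end

section
/- Optimal policies under equity-of-exposure constraints are not envy-free in general (Proposition 1, second part): consider A = {1,2,3,4} partitioned into categories A_1 = {1,2} and A_2 = {3,4}, and two users with rewards ρ^1(1)=1, ρ^1(2)=0, ρ^1(3)=0.8, ρ^1(4)=0.7 and ρ^2(1)=0.8, ρ^2(2)=0.7, ρ^2(3)=1, ρ^2(4)=0. Then for any probability distributions p^1, p^2 on A such that, for each m ∈ {1,2}, p^m maximizes ∑_{a∈A} p(a)ρ^m(a) over all distributions p satisfying the equity-of-exposure constraint for ρ^m, both users envy each other: ∑_a p^2(a)ρ^1(a) > ∑_a p^1(a)ρ^1(a) and ∑_a p^1(a)ρ^2(a) > ∑_a p^2(a)ρ^2(a). -/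
/-!
Utility is linear, so moving the mass of every category onto its best item keeps the category masses
and does not lower utility; an optimal policy therefore only shows the best items. Both users have
the same best items, `0` and `2`; user 1 values them at `1, 0.8` and user 2 at `0.8, 1`. The
constraint gives user 1 the category masses `0.4, 0.6` and user 2 the masses `0.6, 0.4`: each user
gets more of the category whose best item is worth less to them, because its second item also earns
reward. Hence each has utility `0.4 * 1 + 0.6 * 0.8 = 0.88`, but `0.6 * 1 + 0.4 * 0.8 = 0.92` under
the policy of the other.
-/

open Finset

/-- `EEFeasible cat ρ p` says that `p` is a probability distribution on the four items
satisfying the equity-of-exposure constraint for the reward function `ρ`: for each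
category `s`, the mass that `p` puts on category `s` equals the total reward of
category `s` divided by the total reward of all items. -/
def EEFeasible (cat : Fin 4 → Fin 2) (ρ : Fin 4 → ℝ) (p : Fin 4 → ℝ) : Prop :=
  (∀ a, 0 ≤ p a) ∧ (∑ a, p a = 1) ∧
  ∀ s : Fin 2, ∑ a ∈ Finset.univ.filter (fun a => cat a = s), p a =
    (∑ a ∈ Finset.univ.filter (fun a => cat a = s), ρ a) / (∑ a, ρ a)

open scoped Matrix

section Pushforward

variable {α β R : Type*} [Fintype α] [Fintype β]

theorem funOnFinite_map_dotProduct [NonUnitalNonAssocSemiring R] (f : α → β) (p : α → R)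
    (w : β → R) : FunOnFinite.map f p ⬝ᵥ w = p ⬝ᵥ (w ∘ f) := by
  classical
  calc FunOnFinite.map f p ⬝ᵥ w
      = ∑ b, ∑ a with f a = b, p a * w (f a) := by
        refine sum_congr rfl fun b _ => ?_
        rw [FunOnFinite.map_apply_apply, sum_mul]
        exact sum_congr rfl fun a ha => by rw [(mem_filter.mp ha).2]
    _ = p ⬝ᵥ (w ∘ f) := sum_fiberwise univ f fun a => p a * w (f a)

theorem funOnFinite_map_mem_stdSimplex [Semiring R] [PartialOrder R] [IsOrderedRing R]
    (f : α → β) {p : α → R} (hp : p ∈ stdSimplex R α) : FunOnFinite.map f p ∈ stdSimplex R β :=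
  stdSimplex.image_linearMap f (Set.mem_image_of_mem _ hp)

end Pushforward

section BestItem

variable {α κ R : Type*}

/-- `best s` is an item of category `s` with a strictly larger reward than all others in `s`. -/
structure IsUniqueBest [LT R] (cat : α → κ) (ρ : α → R) (best : κ → α) : Prop where
  cat_best : Function.RightInverse best cat
  lt_best : ∀ a ≠ best (cat a), ρ a < ρ (best (cat a))

theorem IsUniqueBest.le_best [Preorder R] {cat : α → κ} {ρ : α → R} {best : κ → α}
    (h : IsUniqueBest cat ρ best) : ρ ≤ ρ ∘ best ∘ cat := fun a => by
  rcases eq_or_ne a (best (cat a)) with ha | ha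
  · exact (congrArg ρ ha).le
  · exact (h.lt_best a ha).le

theorem isUniqueBest_pairs_iff [LT R] {ρ : Fin 4 → R} :
    IsUniqueBest (![0, 0, 1, 1] : Fin 4 → Fin 2) ρ ![0, 2] ↔ ρ 1 < ρ 0 ∧ ρ 3 < ρ 2 := by
  refine ⟨fun h => ⟨h.lt_best 1 (by decide), h.lt_best 3 (by decide)⟩,
    fun ⟨h10, h32⟩ => ⟨by decide, fun a ha => ?_⟩⟩
  fin_cases a
  · exact absurd rfl ha
  · exact h10
  · exact absurd rfl ha
  · exact h32

end BestItem

section CategoryOptimal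

variable {α κ R : Type*} [Fintype α] [Finite κ]

/-- The policy `p` has maximal utility for the rewards `ρ` among the policies that put the same mass
as `p` on every category. The category masses of `p` are its pushforward along `cat`, and its
utility is `p ⬝ᵥ ρ`; that `p` itself lies in the simplex is not part of the definition. -/
def IsCategoryOptimal [Semiring R] [PartialOrder R] (cat : α → κ) (ρ p : α → R) : Prop :=
  IsMaxOn (· ⬝ᵥ ρ) {q ∈ stdSimplex R α | FunOnFinite.map cat q = FunOnFinite.map cat p} p

namespace IsCategoryOptimal

variable [Semiring R] [PartialOrder R] [IsStrictOrderedRing R]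
  {cat : α → κ} {best : κ → α} {ρ σ p q : α → R}

theorem eq_zero_of_lt {r : α → α} (hopt : IsCategoryOptimal cat ρ p)
    (hp : p ∈ stdSimplex R α) (hcat : cat ∘ r = cat) (hr : ρ ≤ ρ ∘ r) {a : α}
    (ha : ρ a < ρ (r a)) : p a = 0 := by
  have map_reassign : FunOnFinite.map cat (FunOnFinite.map r p) = FunOnFinite.map cat p := by
    simpa only [hcat, Function.comp_apply] using (congrFun (FunOnFinite.map_comp cat r) p).symm
  have reassign_le : p ⬝ᵥ (ρ ∘ r) ≤ p ⬝ᵥ ρ := by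
    rw [← funOnFinite_map_dotProduct]
    exact hopt ⟨funOnFinite_map_mem_stdSimplex r hp, map_reassign⟩
  have mul_le (b : α) : p b * ρ b ≤ p b * ρ (r b) := mul_le_mul_of_nonneg_left (hr b) (hp.1 b)
  have mul_eq : p a * ρ a = p a * ρ (r a) :=
    (sum_eq_sum_iff_of_le fun b _ => mul_le b).mp
      ((sum_le_sum fun b _ => mul_le b).antisymm reassign_le) a (mem_univ a)
  by_contra hpa
  exact (mul_lt_mul_of_pos_left ha ((hp.1 a).lt_of_ne' hpa)).ne mul_eq

theorem dotProduct_comp_best (hopt : IsCategoryOptimal cat ρ p) (hp : p ∈ stdSimplex R α)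
    (hbest : IsUniqueBest cat ρ best) (w : α → R) : p ⬝ᵥ (w ∘ best ∘ cat) = p ⬝ᵥ w := by
  refine sum_congr rfl fun a _ => ?_
  rcases eq_or_ne a (best (cat a)) with ha | ha
  · simp only [Function.comp_apply, ← ha]
  · have cat_comp : cat ∘ best ∘ cat = cat := funext fun b => hbest.cat_best (cat b)
    have hpa : p a = 0 := hopt.eq_zero_of_lt hp cat_comp hbest.le_best (hbest.lt_best a ha)
    simp only [hpa, zero_mul]

theorem dotProduct_lt_dotProduct (hq : IsCategoryOptimal cat σ q) (hq_mem : q ∈ stdSimplex R α)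
    (hbest : IsUniqueBest cat σ best) (hp : 0 ≤ p) (hρ : ρ ≤ ρ ∘ best ∘ cat)
    (hlt : p ⬝ᵥ (ρ ∘ best ∘ cat) < q ⬝ᵥ (ρ ∘ best ∘ cat)) : p ⬝ᵥ ρ < q ⬝ᵥ ρ :=
  calc p ⬝ᵥ ρ
      ≤ p ⬝ᵥ (ρ ∘ best ∘ cat) := dotProduct_le_dotProduct_of_nonneg_left hρ hp
    _ < q ⬝ᵥ (ρ ∘ best ∘ cat) := hlt
    _ = q ⬝ᵥ ρ := hq.dotProduct_comp_best hq_mem hbest ρ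

end IsCategoryOptimal

end CategoryOptimal

section EEFeasible

variable {cat : Fin 4 → Fin 2} {best : Fin 2 → Fin 4} {ρ σ p q : Fin 4 → ℝ}

theorem eeFeasible_iff : EEFeasible cat ρ p ↔
    p ∈ stdSimplex ℝ (Fin 4) ∧
      FunOnFinite.map cat p = (∑ a, ρ a)⁻¹ • FunOnFinite.map cat ρ := by
  simp only [EEFeasible, stdSimplex, Set.mem_ofPred_eq, and_assoc, funext_iff, Pi.smul_apply,
    FunOnFinite.map_apply_apply, smul_eq_mul, div_eq_inv_mul]

namespace EEFeasible

theorem isCategoryOptimal (hp : EEFeasible cat ρ p)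
    (hopt : ∀ q, EEFeasible cat ρ q → ∑ a, q a * ρ a ≤ ∑ a, p a * ρ a) :
    IsCategoryOptimal cat ρ p := fun q ⟨hq, hqp⟩ =>
  hopt q (eeFeasible_iff.mpr ⟨hq, hqp.trans (eeFeasible_iff.mp hp).2⟩)

theorem dotProduct_comp_cat (hp : EEFeasible cat ρ p) (v : Fin 2 → ℝ) :
    p ⬝ᵥ (v ∘ cat) = (ρ ⬝ᵥ (v ∘ cat)) / ∑ a, ρ a := by
  rw [← funOnFinite_map_dotProduct, (eeFeasible_iff.mp hp).2, smul_dotProduct,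
    funOnFinite_map_dotProduct, smul_eq_mul, div_eq_inv_mul]

theorem utility_lt_utility (hp : EEFeasible cat ρ p) (hq : EEFeasible cat σ q)
    (hopt : ∀ p', EEFeasible cat σ p' → ∑ a, p' a * σ a ≤ ∑ a, q a * σ a)
    (hbest : IsUniqueBest cat σ best) (hρ : ρ ≤ ρ ∘ best ∘ cat)
    (hlt : (∑ a, ρ a * ρ (best (cat a))) / ∑ a, ρ a < (∑ a, σ a * ρ (best (cat a))) / ∑ a, σ a) :
    ∑ a, p a * ρ a < ∑ a, q a * ρ a := by
  refine (hq.isCategoryOptimal hopt).dotProduct_lt_dotProduct (eeFeasible_iff.mp hq).1 hbest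
    hp.1 hρ ?_
  rw [← Function.comp_assoc, hp.dotProduct_comp_cat, hq.dotProduct_comp_cat]
  exact hlt

end EEFeasible

end EEFeasible

/-- Optimal policies under equity-of-exposure constraints are not envy-free in general
(Proposition 1, second part): with items `{0,1,2,3}` partitioned into categories
`{0,1}` and `{2,3}`, rewards `ρ¹ = (1, 0, 0.8, 0.7)` and `ρ² = (0.8, 0.7, 1, 0)`,
any distributions `p¹, p²` maximizing each user's utility under the
equity-of-exposure constraint make both users envy each other. -/
theorem equity_of_exposure_not_envy_free
    (ρ1 ρ2 : Fin 4 → ℝ)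
    (hρ1 : ρ1 = ![1, 0, 0.8, 0.7]) (hρ2 : ρ2 = ![0.8, 0.7, 1, 0])
    (cat : Fin 4 → Fin 2) (hcat : cat = ![0, 0, 1, 1])
    (p1 p2 : Fin 4 → ℝ)
    (h1feas : EEFeasible cat ρ1 p1)
    (h1opt : ∀ p, EEFeasible cat ρ1 p → ∑ a, p a * ρ1 a ≤ ∑ a, p1 a * ρ1 a)
    (h2feas : EEFeasible cat ρ2 p2)
    (h2opt : ∀ p, EEFeasible cat ρ2 p → ∑ a, p a * ρ2 a ≤ ∑ a, p2 a * ρ2 a) :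
    (∑ a, p1 a * ρ1 a < ∑ a, p2 a * ρ1 a) ∧
    (∑ a, p2 a * ρ2 a < ∑ a, p1 a * ρ2 a) := by
  subst hρ1 hρ2 hcat
  have best1 : IsUniqueBest ![0, 0, 1, 1] ![1, 0, 0.8, (0.7 : ℝ)] ![0, 2] :=
    isUniqueBest_pairs_iff.mpr (by simp only [Matrix.cons_val]; norm_num)
  have best2 : IsUniqueBest ![0, 0, 1, 1] ![0.8, 0.7, 1, (0 : ℝ)] ![0, 2] :=
    isUniqueBest_pairs_iff.mpr (by simp only [Matrix.cons_val]; norm_num)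
  constructor
  · exact h1feas.utility_lt_utility h2feas h2opt best2 best1.le_best
      (by simp only [Fin.sum_univ_four, Matrix.cons_val]; norm_num)
  · exact h2feas.utility_lt_utility h1feas h1opt best1 best2.le_best
      (by simp only [Fin.sum_univ_four, Matrix.cons_val]; norm_num)
end

section
/- The optimal value of the equity-of-exposure linear program: let A be a finite item set partitioned into categories A_1, …, A_S and ρ: A → [0,1] with ∑_{a∈A} ρ(a) > 0. Then the maximum of ∑_{a∈A} p(a)ρ(a) over probability distributions p on A satisfying the equity-of-exposure constraint for ρ equals ∑_{s=1}^S (max_{a∈A_s} ρ(a)) · (∑_{a∈A_s} ρ(a)) / (∑_{a∈A} ρ(a)), and it is attained by the distribution that puts, in each category A_s, the whole category mass (∑_{a∈A_s} ρ(a))/(∑_{a∈A} ρ(a)) on an item of A_s maximizing ρ. -/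
open Finset

/-- `EEFeasibleG cat ρ p` says that `p` is a probability distribution on the finite
item set `A` (partitioned into categories by `cat : A → Fin S`) satisfying the
equity-of-exposure constraint for the reward function `ρ`: for each category `s`,
the mass that `p` puts on category `s` equals the total reward of category `s`
divided by the total reward of all items. -/
def EEFeasibleG {A : Type*} [Fintype A] {S : ℕ} (cat : A → Fin S) (ρ : A → ℝ)
    (p : A → ℝ) : Prop :=
  (∀ a, 0 ≤ p a) ∧ (∑ a, p a = 1) ∧
  ∀ s : Fin S, ∑ a ∈ Finset.univ.filter (fun a => cat a = s), p a =
    (∑ a ∈ Finset.univ.filter (fun a => cat a = s), ρ a) / (∑ a, ρ a)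

section FiberWeights

variable {A ι R : Type*}

/-- The weight on `A` that puts, in each fiber of `cat`, the whole prescribed mass `m s` on the
single item `b s`. It is meant for sections `b` of `cat`; where `cat (b s) ≠ s`, the mass `m s` is
lost. -/
def concentratedWeight [DecidableEq A] [Zero R] (cat : A → ι) (b : ι → A) (m : ι → R) : A → R :=
  fun a => if a = b (cat a) then m (cat a) else 0

theorem concentratedWeight_nonneg [DecidableEq A] [Zero R] [Preorder R] (cat : A → ι) (b : ι → A)
    {m : ι → R} (hm : ∀ s, 0 ≤ m s) (a : A) : 0 ≤ concentratedWeight cat b m a := by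
  unfold concentratedWeight
  split_ifs
  exacts [hm _, le_rfl]

theorem concentratedWeight_mul [DecidableEq A] [MulZeroClass R] (cat : A → ι) (b : ι → A)
    (m : ι → R) (f : A → R) (a : A) :
    concentratedWeight cat b m a * f a = concentratedWeight cat b (fun s => m s * f (b s)) a := by
  simp only [concentratedWeight]
  split_ifs with ha
  · rw [← ha]
  · rw [zero_mul]

variable [Fintype A] {cat : A → ι} {b : ι → A}

theorem sum_fiber_concentratedWeight [DecidableEq A] [DecidableEq ι] [AddCommMonoid R]
    (hb : Function.LeftInverse cat b) (m : ι → R) (s : ι) :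
    ∑ a with cat a = s, concentratedWeight cat b m a = m s := by
  rw [sum_eq_single_of_mem (b s) (by simp [hb s])]
  · simp [concentratedWeight, hb s]
  · intro a ha hne
    obtain rfl : cat a = s := (mem_filter.mp ha).2
    exact if_neg hne

variable [Fintype ι]

theorem sum_concentratedWeight_mul [DecidableEq A] [NonUnitalNonAssocSemiring R]
    (hb : Function.LeftInverse cat b) (m : ι → R) (f : A → R) :
    ∑ a, concentratedWeight cat b m a * f a = ∑ s, m s * f (b s) := by
  classical
  simp only [concentratedWeight_mul, ← sum_fiberwise univ cat, sum_fiber_concentratedWeight hb]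

theorem sum_mul_le_sum_fiber_mul [DecidableEq ι] [NonUnitalNonAssocSemiring R] [PartialOrder R]
    [IsOrderedAddMonoid R] [PosMulMono R] {p f : A → R} {M : ι → R} (hp : ∀ a, 0 ≤ p a)
    (hf : ∀ a, f a ≤ M (cat a)) :
    ∑ a, p a * f a ≤ ∑ s, (∑ a with cat a = s, p a) * M s :=
  calc
    ∑ a, p a * f a ≤ ∑ a, p a * M (cat a) :=
      sum_le_sum fun a _ => mul_le_mul_of_nonneg_left (hf a) (hp a)
    _ = ∑ s, ∑ a with cat a = s, p a * M (cat a) := (sum_fiberwise univ cat _).symm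
    _ = ∑ s, (∑ a with cat a = s, p a) * M s := by
      refine sum_congr rfl fun s _ => ?_
      rw [sum_mul]
      exact sum_congr rfl fun a ha => by rw [(mem_filter.mp ha).2]

end FiberWeights

section CategoryShare

variable {A ι K : Type*} [Fintype A] [DecidableEq ι]

/-- The share of the total reward carried by category `s`, which is the exposure that the
equity-of-exposure constraint prescribes for `s`; it is the junk value `0` when the total reward
vanishes. -/
def categoryShare [DivisionSemiring K] (cat : A → ι) (ρ : A → K) (s : ι) : K :=
  (∑ a with cat a = s, ρ a) / ∑ a, ρ a

theorem sum_categoryShare [DivisionSemiring K] [Fintype ι] (cat : A → ι) {ρ : A → K}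
    (hρ : ∑ a, ρ a ≠ 0) : ∑ s, categoryShare cat ρ s = 1 := by
  simp only [categoryShare]
  rw [← sum_div, sum_fiberwise, div_self hρ]

end CategoryShare

theorem EEFeasibleG.of_sum_fiber_eq {A : Type*} [Fintype A] {S : ℕ} {cat : A → Fin S}
    {ρ p : A → ℝ} (hρ : ∑ a, ρ a ≠ 0) (hp : ∀ a, 0 ≤ p a)
    (hmass : ∀ s, ∑ a with cat a = s, p a = categoryShare cat ρ s) : EEFeasibleG cat ρ p := by
  refine ⟨hp, ?_, hmass⟩
  rw [← sum_fiberwise univ cat, ← sum_categoryShare cat hρ]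
  exact sum_congr rfl fun s _ => hmass s

theorem equity_of_exposure_optimal_value_general
    {A : Type*} [Fintype A] [DecidableEq A] {S : ℕ} {cat : A → Fin S} {ρ : A → ℝ}
    (hρ : ∀ s, 0 ≤ ∑ a with cat a = s, ρ a) (hρpos : 0 < ∑ a, ρ a)
    {b : Fin S → A} (hb : Function.LeftInverse cat b)
    {f : A → ℝ} (hbmax : ∀ a, f a ≤ f (b (cat a))) :
    EEFeasibleG cat ρ (concentratedWeight cat b (categoryShare cat ρ)) ∧
    (∑ a, concentratedWeight cat b (categoryShare cat ρ) a * f a =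
      ∑ s, categoryShare cat ρ s * f (b s)) ∧
    (∀ p, EEFeasibleG cat ρ p →
      ∑ a, p a * f a ≤ ∑ s, categoryShare cat ρ s * f (b s)) := by
  have share_nonneg (s : Fin S) : 0 ≤ categoryShare cat ρ s := div_nonneg (hρ s) hρpos.le
  refine ⟨.of_sum_fiber_eq hρpos.ne' (concentratedWeight_nonneg cat b share_nonneg)
    (sum_fiber_concentratedWeight hb _), sum_concentratedWeight_mul hb _ f, ?_⟩
  rintro p ⟨hp, -, hmass⟩
  calc
    ∑ a, p a * f a ≤ ∑ s, (∑ a with cat a = s, p a) * f (b s) := sum_mul_le_sum_fiber_mul hp hbmax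
    _ = ∑ s, categoryShare cat ρ s * f (b s) := by simp only [hmass, categoryShare]

/-- The optimal value of the equity-of-exposure linear program: with `b s` an item of
category `s` maximizing `ρ` over that category, the distribution `pstar` giving, in
each category `s`, the whole category mass to `b s` is feasible, its utility equals
`∑_s (max_{a ∈ A_s} ρ a) · (∑_{a ∈ A_s} ρ a) / (∑_a ρ a)`, and this value is the
maximum utility over all feasible distributions. -/
theorem equity_of_exposure_optimal_value
    {A : Type*} [Fintype A] [DecidableEq A] {S : ℕ} (cat : A → Fin S) (ρ : A → ℝ)
    (hρ : ∀ a, ρ a ∈ Set.Icc (0 : ℝ) 1) (hρpos : 0 < ∑ a, ρ a)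
    (b : Fin S → A) (hb : ∀ s, cat (b s) = s)
    (hbmax : ∀ s a, cat a = s → ρ a ≤ ρ (b s))
    (pstar : A → ℝ)
    (hpstar : pstar = fun a => if a = b (cat a) then
      (∑ a' ∈ Finset.univ.filter (fun a' => cat a' = cat a), ρ a') / (∑ a', ρ a')
      else 0) :
    EEFeasibleG cat ρ pstar ∧
    (∑ a, pstar a * ρ a =
      ∑ s : Fin S, ρ (b s) *
        (∑ a ∈ Finset.univ.filter (fun a => cat a = s), ρ a) / (∑ a, ρ a)) ∧
    (∀ p, EEFeasibleG cat ρ p →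
      ∑ a, p a * ρ a ≤
        ∑ s : Fin S, ρ (b s) *
          (∑ a ∈ Finset.univ.filter (fun a => cat a = s), ρ a) / (∑ a, ρ a)) := by
  subst hpstar
  simp only [mul_div_right_comm, mul_comm (ρ (b _))]
  exact equity_of_exposure_optimal_value_general (fun s => sum_nonneg fun a _ => (hρ a).1) hρpos hb
    fun a => hbmax (cat a) a rfl
end

section
/- If every user likes only a single item category, optimal equity-of-exposure policies are envy-free: let A be a finite item set partitioned into categories A_1, …, A_S and, for each user m ∈ {1,…,M}, let ρ^m: A → [0,1] with ∑_{a∈A} ρ^m(a) > 0 and suppose there exists a category s_m such that ρ^m(a) = 0 for all a ∉ A_{s_m}. Then (i) the maximum of ∑_a p(a)ρ^m(a) over probability distributions p satisfying the equity-of-exposure constraint for ρ^m equals max_{a∈A} ρ^m(a), the unconstrained optimal utility of user m; and (ii) consequently, for any policies (p^m)_{m=1}^M where each p^m attains this constrained maximum, the system is 0-envy-free: ∑_a p^n(a)ρ^m(a) ≤ ∑_a p^m(a)ρ^m(a) for all m, n. -/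
open Finset

/-!
When all reward lies in one category, the equity-of-exposure constraint only asks that all exposure
lie there too. The best item belongs to that category because its reward is positive, so the point
mass at it is feasible, and no distribution does better.
-/

theorem sum_fiber_of_eq_zero_off_fiber {α κ M : Type*} [Fintype α] [DecidableEq κ]
    [AddCommMonoid M] {g : α → κ} {c : κ} {f : α → M} (hf : ∀ a, g a ≠ c → f a = 0) (s : κ) :
    ∑ a with g a = s, f a = if s = c then ∑ a, f a else 0 := by
  split_ifs with hs
  · exact sum_filter_of_ne fun a _ ha => hs ▸ not_imp_comm.1 (hf a) ha
  · refine sum_eq_zero fun a ha => hf a ?_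
    rwa [(mem_filter.1 ha).2]

theorem apply_eq_of_forall_le_of_sum_pos {α κ M : Type*} [Fintype α] [AddCommMonoid M]
    [PartialOrder M] [IsOrderedAddMonoid M] {g : α → κ} {c : κ} {f : α → M}
    (hf : ∀ a, g a ≠ c → f a = 0) (hpos : 0 < ∑ a, f a) {b : α} (hb : ∀ a, f a ≤ f b) :
    g b = c := by
  by_contra hne
  exact hpos.not_ge (sum_nonpos fun a _ => (hb a).trans_eq (hf b hne))

theorem sum_mul_le_of_mem_stdSimplex {α R : Type*} [Fintype α] [Semiring R] [PartialOrder R]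
    [IsOrderedRing R] {p f : α → R} {c : R} (hp : p ∈ stdSimplex R α) (hf : ∀ a, f a ≤ c) :
    ∑ a, p a * f a ≤ c :=
  calc ∑ a, p a * f a
      ≤ ∑ a, p a * c := sum_le_sum fun a _ => mul_le_mul_of_nonneg_left (hf a) (hp.1 a)
    _ = c := by rw [← sum_mul, hp.2, one_mul]

section EquityOfExposure

variable {A : Type*} [Fintype A] {S : ℕ} {cat : A → Fin S} {ρ p : A → ℝ}

theorem EEFeasibleG.mem_stdSimplex (hp : EEFeasibleG cat ρ p) : p ∈ stdSimplex ℝ A :=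
  ⟨hp.1, hp.2.1⟩

theorem EEFeasibleG.of_eq_zero_off_category {c : Fin S} (hρ : ∀ a, cat a ≠ c → ρ a = 0)
    (hsum : ∑ a, ρ a ≠ 0) (hp : p ∈ stdSimplex ℝ A) (hpc : ∀ a, cat a ≠ c → p a = 0) :
    EEFeasibleG cat ρ p := by
  refine ⟨hp.1, hp.2, fun s => ?_⟩
  rw [sum_fiber_of_eq_zero_off_fiber hpc, sum_fiber_of_eq_zero_off_fiber hρ, hp.2, ite_div,
    div_self hsum, zero_div]

theorem EEFeasibleG.single [DecidableEq A] {b : A} (hρ : ∀ a, cat a ≠ cat b → ρ a = 0)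
    (hsum : ∑ a, ρ a ≠ 0) : EEFeasibleG cat ρ (Pi.single b 1) :=
  .of_eq_zero_off_category hρ hsum (single_mem_stdSimplex ℝ b) fun _ ha =>
    Pi.single_eq_of_ne (ne_of_apply_ne cat ha) 1

theorem isGreatest_utility_of_eq_zero_off_category [Nonempty A] {c : Fin S}
    (hρ : ∀ a, cat a ≠ c → ρ a = 0) (hpos : 0 < ∑ a, ρ a) :
    IsGreatest ((fun p => ∑ a, p a * ρ a) '' {p | EEFeasibleG cat ρ p})
      (univ.sup' univ_nonempty ρ) := by
  classical
  have hle (a : A) : ρ a ≤ univ.sup' univ_nonempty ρ := le_sup' ρ (mem_univ a)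
  obtain ⟨b, -, hb⟩ := exists_mem_eq_sup' univ_nonempty ρ
  obtain rfl : cat b = c := apply_eq_of_forall_le_of_sum_pos hρ hpos (hb ▸ hle)
  constructor
  · exact ⟨Pi.single b 1, .single hρ hpos.ne', by simp [Pi.single_apply, hb]⟩
  · rintro _ ⟨p, hp, rfl⟩
    exact sum_mul_le_of_mem_stdSimplex hp.mem_stdSimplex hle

end EquityOfExposure

theorem single_category_equity_of_exposure_envy_free_general
    {A ι : Type*} [Fintype A] [Nonempty A] {S : ℕ}
    (cat : A → Fin S) (ρ : ι → A → ℝ) (hρpos : ∀ m, 0 < ∑ a, ρ m a)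
    (sm : ι → Fin S) (honecat : ∀ m a, cat a ≠ sm m → ρ m a = 0)
    (p : ι → A → ℝ)
    (hfeas : ∀ m, EEFeasibleG cat (ρ m) (p m))
    (hopt : ∀ m p', EEFeasibleG cat (ρ m) p' →
      ∑ a, p' a * ρ m a ≤ ∑ a, p m a * ρ m a) :
    (∀ m, ∑ a, p m a * ρ m a = univ.sup' univ_nonempty (ρ m)) ∧
    (∀ m n, ∑ a, p n a * ρ m a ≤ ∑ a, p m a * ρ m a) := by
  have hmax (m : ι) : ∑ a, p m a * ρ m a = univ.sup' univ_nonempty (ρ m) := by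
    have hattained : IsGreatest ((fun p' => ∑ a, p' a * ρ m a) '' {p' | EEFeasibleG cat (ρ m) p'})
        (∑ a, p m a * ρ m a) :=
      ⟨⟨p m, hfeas m, rfl⟩, Set.forall_mem_image.2 (hopt m)⟩
    exact hattained.unique (isGreatest_utility_of_eq_zero_off_category (honecat m) (hρpos m))
  refine ⟨hmax, fun m n => ?_⟩
  rw [hmax m]
  exact sum_mul_le_of_mem_stdSimplex (hfeas n).mem_stdSimplex fun a => le_sup' (ρ m) (mem_univ a)

/-- If every user likes only a single item category, optimal equity-of-exposure
policies are envy-free: if each user `m` has `ρ m a = 0` outside a single category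
`sm m`, then (i) the maximum utility over distributions satisfying the
equity-of-exposure constraint for `ρ m` equals `max_{a ∈ A} ρ m a`, the
unconstrained optimum, and (ii) any policies `(p m)` attaining these constrained
maxima form a `0`-envy-free system. -/
theorem single_category_equity_of_exposure_envy_free
    {A : Type*} [Fintype A] [Nonempty A] {S M : ℕ}
    (cat : A → Fin S) (ρ : Fin M → A → ℝ)
    (hρ : ∀ m a, ρ m a ∈ Set.Icc (0 : ℝ) 1) (hρpos : ∀ m, 0 < ∑ a, ρ m a)
    (sm : Fin M → Fin S) (honecat : ∀ m a, cat a ≠ sm m → ρ m a = 0)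
    (p : Fin M → A → ℝ)
    (hfeas : ∀ m, EEFeasibleG cat (ρ m) (p m))
    (hopt : ∀ m p', EEFeasibleG cat (ρ m) p' →
      ∑ a, p' a * ρ m a ≤ ∑ a, p m a * ρ m a) :
    (∀ m, ∑ a, p m a * ρ m a = Finset.univ.sup' Finset.univ_nonempty (ρ m)) ∧
    (∀ m n, ∑ a, p n a * ρ m a ≤ ∑ a, p m a * ρ m a) :=
  single_category_equity_of_exposure_envy_free_general cat ρ hρpos sm honecat p hfeas hopt
end

section
/- Safety of the conservative check ξ_t (step of Theorem 3): let K ≥ 1, t ≥ 1 be integers, α ∈ [0,1], and let k_1, …, k_t ∈ {0,1,…,K} be the arms pulled, with k_t = ℓ ≠ 0. Let μ_0, …, μ_K ∈ [0,1] be the arm means, r_1, …, r_{t−1} ∈ ℝ the observed rewards, A = {s ∈ {1,…,t−1} : k_s ≠ 0} and N_0 = |{s ∈ {1,…,t−1} : k_s = 0}|. Suppose L_ℓ ≤ μ_ℓ, μ_0 ≤ U_0, and Φ ≥ 0 satisfies ∑_{s∈A}(μ_{k_s} − r_s) ≥ −Φ. If ξ := ∑_{s∈A} r_s − Φ + L_ℓ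 + (N_0 − (1−α)t)·U_0 ≥ 0, then the conservative exploration constraint holds at time t: ∑_{s=1}^t μ_{k_s} ≥ (1−α)·μ_0·t. -/
open Finset

/-!
Let `M` be the total mean reward of the exploratory rounds, the last round included, and let
`c = N₀ - (1 - α) t`. The constraint says that the affine function `u ↦ M + c * u` is nonnegative at
`u = μ₀`. It is nonnegative at `0` because the means are, and at `U₀ ≥ μ₀` because the check passes
and the confidence bounds turn observed rewards into means; hence it is nonnegative in between,
whatever the sign of `c`.
-/

theorem add_mul_nonneg_of_nonneg_of_le {R : Type*} [Ring R] [LinearOrder R] [IsOrderedRing R]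
    {a c u v : R} (ha : 0 ≤ a) (hu : 0 ≤ u) (huv : u ≤ v) (hv : 0 ≤ a + c * v) :
    0 ≤ a + c * u := by
  rcases le_total 0 c with hc | hc
  · exact add_nonneg ha (mul_nonneg hc hu)
  · exact hv.trans (add_le_add_right (mul_le_mul_of_nonpos_left huv hc) a)

theorem sum_comp_eq_sum_filter_ne_add_card_nsmul {σ ι M : Type*} [DecidableEq ι] [AddCommMonoid M]
    (s : Finset σ) (k : σ → ι) (f : ι → M) (b : ι) :
    ∑ i ∈ s, f (k i) = (∑ i ∈ s with k i ≠ b, f (k i)) + #{i ∈ s | k i = b} • f b := by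
  have hconst : ∑ i ∈ s with k i = b, f (k i) = #{i ∈ s | k i = b} • f b :=
    sum_eq_card_nsmul fun i hi => congrArg f (mem_filter.mp hi).2
  rw [← sum_filter_not_add_sum_filter s (k · = b), hconst]

theorem conservative_check_safety_general {ι : Type*} [DecidableEq ι] (b : ι) (n : ℕ) (α : ℝ)
    (k : ℕ → ι) (μ : ι → ℝ) (hμb : 0 ≤ μ b) (hμk : ∀ s ≤ n, 0 ≤ μ (k s))
    (r : ℕ → ℝ) (L U Φ : ℝ) (hL : L ≤ μ (k n)) (hU : μ b ≤ U)
    (hdev : -Φ ≤ ∑ s ∈ range n with k s ≠ b, (μ (k s) - r s))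
    (hξ : 0 ≤ (∑ s ∈ range n with k s ≠ b, r s) - Φ + L
      + ((#{s ∈ range n | k s = b} : ℝ) - (1 - α) * (n + 1 : ℕ)) * U) :
    (1 - α) * μ b * (n + 1 : ℕ) ≤ ∑ s ∈ range (n + 1), μ (k s) := by
  set N₀ := (#{s ∈ range n | k s = b} : ℝ)
  set M := (∑ s ∈ range n with k s ≠ b, μ (k s)) + μ (k n)
  have hM_nonneg : 0 ≤ M :=
    add_nonneg (sum_nonneg fun s hs => hμk s (mem_range.mp (mem_filter.mp hs).1).le)
      (hμk n le_rfl)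
  have hcheck_means : 0 ≤ M + (N₀ - (1 - α) * (n + 1 : ℕ)) * U := by
    rw [sum_sub_distrib] at hdev
    linarith
  have hcheck_baseline : 0 ≤ M + (N₀ - (1 - α) * (n + 1 : ℕ)) * μ b :=
    add_mul_nonneg_of_nonneg_of_le hM_nonneg hμb hU hcheck_means
  calc
    (1 - α) * μ b * (n + 1 : ℕ) ≤ M + N₀ * μ b := by linarith
    _ = ∑ s ∈ range (n + 1), μ (k s) := by
      rw [sum_range_succ, sum_comp_eq_sum_filter_ne_add_card_nsmul (range n) k μ b,
        nsmul_eq_mul, add_right_comm]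

/-- Safety of the conservative check `ξ_t` (step of Theorem 3): at time `t`, if the
arm pulled is `ℓ ≠ 0`, the confidence bounds `Lℓ ≤ μ ℓ` and `μ 0 ≤ U0` hold, the
deviation bound `∑_{s∈A}(μ_{k_s} − r_s) ≥ −Φ` holds on the exploratory rounds
`A = {s < t−1 : k_s ≠ 0}`, and the conservative check
`ξ = ∑_{s∈A} r_s − Φ + Lℓ + (N₀ − (1−α)t)·U0 ≥ 0` passes, then the conservative
exploration constraint `∑_{s<t} μ_{k_s} ≥ (1−α)·μ₀·t` holds at time `t`.
(Rounds are indexed by `s ∈ {0, …, t−1}`, the last round being `s = t−1`.) -/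
theorem conservative_check_safety
    (K t : ℕ) (hK : 1 ≤ K) (ht : 1 ≤ t) (α : ℝ) (hα0 : 0 ≤ α) (hα1 : α ≤ 1)
    (k : ℕ → ℕ) (hk : ∀ s, s < t → k s ≤ K)
    (ℓ : ℕ) (hℓ : ℓ ≠ 0) (hkt : k (t - 1) = ℓ)
    (μ : ℕ → ℝ) (hμ0 : ∀ i, i ≤ K → 0 ≤ μ i) (hμ1 : ∀ i, i ≤ K → μ i ≤ 1)
    (r : ℕ → ℝ) (Lℓ U0 Φ : ℝ) (hL : Lℓ ≤ μ ℓ) (hU : μ 0 ≤ U0) (hΦ : 0 ≤ Φ)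
    (A : Finset ℕ) (hA : A = (Finset.range (t - 1)).filter (fun s => k s ≠ 0))
    (N0 : ℕ) (hN0 : N0 = ((Finset.range (t - 1)).filter (fun s => k s = 0)).card)
    (hdev : ∑ s ∈ A, (μ (k s) - r s) ≥ -Φ)
    (hξ : (∑ s ∈ A, r s) - Φ + Lℓ + ((N0 : ℝ) - (1 - α) * t) * U0 ≥ 0) :
    ∑ s ∈ Finset.range t, μ (k s) ≥ (1 - α) * μ 0 * t := by
  obtain ⟨n, rfl⟩ := Nat.exists_eq_add_of_le' ht
  subst hkt hA hN0
  exact conservative_check_safety_general 0 n α k μ (hμ0 0 K.zero_le)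
    (fun s hs => hμ0 _ (hk s (Nat.lt_succ_of_le hs))) r Lℓ U0 Φ hL hU hdev hξ
end
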